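/- For every i ∈ {0,1,2,3}, every integer k ≥ 0 and ε = ±1 with (i,k,ε) ∉ {(0,0,1), (0,0,−1), (0,1,1), (0,1,−1), (1,0,1), (1,0,−1), (2,0,1), (2,0,−1)}, the Lehmer pair associated with (a,b) = (ζ^{(i)}_{k−ε}, −ζ^{(i)}_{k+ε}) is a 12-defective Lehmer pair. -/

import Mathlib

open Complex

/-- A fixed choice of complex square root of an integer. -/
noncomputable def csqrt (a : ℤ) : ℂ := (a : ℂ) ^ ((1 : ℂ) / 2)

/-- First component of the Lehmer pair associated with `(a, b)`: `(√a - √b)/2`. -/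
noncomputable def assocFst (a b : ℤ) : ℂ := (csqrt a - csqrt b) / 2

/-- Second component of the Lehmer pair associated with `(a, b)`: `(√a + √b)/2`. -/
noncomputable def assocSnd (a b : ℤ) : ℂ := (csqrt a + csqrt b) / 2

/-- `(α, β)` is a Lehmer pair: `α`, `β` are algebraic integers, `(α+β)^2` and `αβ` are
nonzero coprime rational integers, and `α/β` is not a root of unity. -/
def IsLehmerPair (α β : ℂ) : Prop :=
  IsIntegral ℤ α ∧ IsIntegral ℤ β ∧
  (∃ p q : ℤ, ((α + β) ^ 2 = (p : ℂ)) ∧ (α * β = (q : ℂ)) ∧ p ≠ 0 ∧ q ≠ 0 ∧ IsCoprime p q) ∧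
  ¬ ∃ n : ℕ, 0 < n ∧ (α / β) ^ n = 1

/-- The Lehmer numbers `ũ_n(α, β)`. -/
noncomputable def lehmerU (α β : ℂ) (n : ℕ) : ℂ :=
  if Odd n then (α ^ n - β ^ n) / (α - β) else (α ^ n - β ^ n) / (α ^ 2 - β ^ 2)

/-- `z` is an integer divisible by `ℓ`. -/
def IntDvd (ℓ : ℕ) (z : ℂ) : Prop := ∃ m : ℤ, (m : ℂ) = z ∧ (ℓ : ℤ) ∣ m

/-- `ℓ` is a primitive divisor of `ũ_n(α, β)`: `ℓ` is a prime dividing `ũ_n(α, β)` but not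
dividing `(α^2 - β^2)^2 ũ_1(α,β) ⋯ ũ_{n-1}(α,β)`. -/
def IsPrimitiveDivisor (ℓ : ℕ) (n : ℕ) (α β : ℂ) : Prop :=
  ℓ.Prime ∧ IntDvd ℓ (lehmerU α β n) ∧
  ¬ IntDvd ℓ ((α ^ 2 - β ^ 2) ^ 2 * ∏ i ∈ Finset.Ico 1 n, lehmerU α β i)

/-- `(α, β)` is an `n`-defective Lehmer pair: a Lehmer pair such that `ũ_n(α, β)` has no
primitive divisor. -/
def IsDefective (n : ℕ) (α β : ℂ) : Prop :=
  IsLehmerPair α β ∧ ∀ ℓ : ℕ, ¬ IsPrimitiveDivisor ℓ n α β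

/-- Two Lehmer pairs `(α₁, β₁)` and `(α₂, β₂)` are equivalent if
`α₁/α₂ = β₁/β₂ ∈ {1, -1, i, -i}`. -/
def LehmerEquiv (α₁ β₁ α₂ β₂ : ℂ) : Prop :=
  ∃ c : ℂ, (c = 1 ∨ c = -1 ∨ c = Complex.I ∨ c = -Complex.I) ∧ α₁ = c * α₂ ∧ β₁ = c * β₂

/-- `phiAux n = φ_{n-2}`: the Fibonacci sequence shifted so as to start at index `-2`. -/
def phiAux : ℕ → ℤ
  | 0 => -1
  | 1 => 1
  | n + 2 => phiAux (n + 1) + phiAux n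

/-- `φ_k` for integer `k ≥ -2`: `φ_{-2} = -1`, `φ_{-1} = 1`, `φ_{k+1} = φ_k + φ_{k-1}`. -/
def phi (k : ℤ) : ℤ := phiAux (k + 2).toNat

/-- `psiAux n = ψ_{n-2}`: the Lucas sequence shifted so as to start at index `-2`. -/
def psiAux : ℕ → ℤ
  | 0 => 3
  | 1 => -1
  | n + 2 => psiAux (n + 1) + psiAux n

/-- `ψ_k` for integer `k ≥ -2`: `ψ_{-2} = 3`, `ψ_{-1} = -1`, `ψ_{k+1} = ψ_k + ψ_{k-1}`. -/
def psi (k : ℤ) : ℤ := psiAux (k + 2).toNat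

/-- `piAux n = π_{n-1}`. -/
def piAux : ℕ → ℤ
  | 0 => 1
  | 1 => 0
  | n + 2 => 2 * piAux (n + 1) + piAux n

/-- `π_k` for integer `k ≥ -1`: `π_{-1} = 1`, `π_0 = 0`, `π_{k+1} = 2π_k + π_{k-1}`. -/
def piSeq (k : ℤ) : ℤ := piAux (k + 1).toNat

/-- `rhoAux n = ρ_{n-1}`. -/
def rhoAux : ℕ → ℤ
  | 0 => -1
  | 1 => 1
  | n + 2 => 2 * rhoAux (n + 1) + rhoAux n

/-- `ρ_k` for integer `k ≥ -1`: `ρ_{-1} = -1`, `ρ_0 = 1`, `ρ_{k+1} = 2ρ_k + ρ_{k-1}`. -/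
def rhoSeq (k : ℤ) : ℤ := rhoAux (k + 1).toNat

/-- `zetaAux i n = ζ^{(i)}_{n-1}`. -/
def zetaAux (i : ℕ) : ℕ → ℤ
  | 0 => if i = 0 then -1 else if i = 1 then 2 else if i = 2 then 1 else -1
  | 1 => if i = 0 then 0 else 1
  | n + 2 => 4 * zetaAux i (n + 1) - zetaAux i n

/-- `ζ^{(i)}_k` for integer `k ≥ -1`, satisfying `ζ^{(i)}_{k+1} = 4ζ^{(i)}_k - ζ^{(i)}_{k-1}`
with initial values `(ζ^{(i)}_{-1}, ζ^{(i)}_0)` equal to `(-1, 0)`, `(2, 1)`, `(1, 1)`,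
`(-1, 1)` for `i = 0, 1, 2, 3` respectively. -/
def zeta (i : ℕ) (k : ℤ) : ℤ := zetaAux i (k + 1).toNat

/-!
For a Lehmer pair with `p = (α + β)²` and `q = αβ`, the twelfth Lehmer number is
`ũ₁₂ = ũ₄ ũ₆ Φ`, where `Φ = p² - 4pq + q²` is the homogenised cyclotomic polynomial `Φ₁₂(α, β)`.
Since `Φ = (p - q)² - 2pq = (p - 2q)² - 3q²` with `ũ₃ = p - q` and `ũ₄ = p - 2q`, a prime `2` or
`3` dividing `Φ` already divides `ũ₃` or `ũ₄`; hence the pair is 12-defective as soon as `Φ ∣ 6`.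
As `√a`, `√b` give `p = a` and `q = (a - b) / 4`, the pair of the theorem has `p = ζ_{k-ε}` and
`q = ζ_k`. The recurrence `ζ_{k+1} = 4 ζ_k - ζ_{k-1}` leaves `Φ(ζ_{k-1}, ζ_k)` invariant, and its
value is `1`, `-3`, `-2` or `6`. Finally `α / β` is a root of unity only if
`p / q = α / β + β / α + 2` is one of `0, …, 4`; this, or `q = 0`, happens exactly in the
excluded cases.
-/

section LehmerSeq

variable {R S : Type*} [CommRing R] [CommRing S]

/-- The Lehmer numbers `ũ_n(α, β)` as a sequence in an arbitrary commutative ring, in terms of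
`p = (α + β)²` and `q = αβ`. The coefficient of `ũ_{n+1}` alternates between `1` and `p` because
`ũ_n` has denominator `α - β` or `α² - β²` according to the parity of `n`. -/
def lehmerSeq (p q : R) : ℕ → R
  | 0 => 0
  | 1 => 1
  | n + 2 => (if Even n then 1 else p) * lehmerSeq p q (n + 1) - q * lehmerSeq p q n

/-- The homogenised cyclotomic polynomial `Φ₁₂(α, β) = α⁴ - α²β² + β⁴`, in terms of
`p = (α + β)²` and `q = αβ`. -/
def cyclotomicTwelve (p q : R) : R := p ^ 2 - 4 * p * q + q ^ 2

lemma map_lehmerSeq (f : R →+* S) (p q : R) (n : ℕ) :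
    f (lehmerSeq p q n) = lehmerSeq (f p) (f q) n := by
  induction n using Nat.twoStepInduction with
  | zero => simp [lehmerSeq]
  | one => simp [lehmerSeq]
  | more n ih₀ ih₁ => simp [lehmerSeq, ih₀, ih₁, apply_ite f]

lemma lehmerSeq_mul_eq_pow_sub_pow (x y : R) (n : ℕ) :
    lehmerSeq ((x + y) ^ 2) (x * y) n * (if Odd n then x - y else x ^ 2 - y ^ 2) =
      x ^ n - y ^ n := by
  induction n using Nat.twoStepInduction with
  | zero => simp [lehmerSeq]
  | one => simp [lehmerSeq]
  | more n ih₀ ih₁ =>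
    have pow_sub_pow_add_two : x ^ (n + 2) - y ^ (n + 2) =
        (x + y) * (x ^ (n + 1) - y ^ (n + 1)) - x * y * (x ^ n - y ^ n) := by ring
    rw [pow_sub_pow_add_two, ← ih₀, ← ih₁, lehmerSeq]
    rcases Nat.even_or_odd n with hn | hn
    · simp only [hn, hn.add_one, hn.add even_two, Nat.not_odd_iff_even.2, if_true, if_false]
      ring
    · simp only [hn, hn.add_one, hn.add_even even_two, Nat.not_odd_iff_even.2,
        Nat.not_even_iff_odd.2, if_true, if_false]
      ring

lemma lehmerSeq_three (p q : R) : lehmerSeq p q 3 = p - q := by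
  simp [lehmerSeq]

lemma lehmerSeq_four (p q : R) : lehmerSeq p q 4 = p - 2 * q := by
  simp only [lehmerSeq, even_two, Nat.not_even_one, Even.zero, if_true, if_false, mul_one,
    mul_zero, sub_zero, one_mul]
  ring

lemma lehmerSeq_twelve (p q : R) :
    lehmerSeq p q 12 = lehmerSeq p q 4 * lehmerSeq p q 6 * cyclotomicTwelve p q := by
  simp only [lehmerSeq, cyclotomicTwelve, Nat.even_add_one, even_two, Even.zero,
    not_true_eq_false, not_false_eq_true, if_true, if_false, mul_one, mul_zero, sub_zero,
    one_mul]
  ring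

lemma dvd_lehmerSeq_three_of_dvd_two {p q π : R} (hπ : Prime π) (h2 : π ∣ 2)
    (h : π ∣ cyclotomicTwelve p q) : π ∣ lehmerSeq p q 3 := by
  refine hπ.dvd_of_dvd_pow (n := 2) ?_
  have hsq : lehmerSeq p q 3 ^ 2 = cyclotomicTwelve p q + 2 * (p * q) := by
    rw [lehmerSeq_three, cyclotomicTwelve]; ring
  exact hsq ▸ dvd_add h (h2.mul_right _)

lemma dvd_lehmerSeq_four_of_dvd_three {p q π : R} (hπ : Prime π) (h3 : π ∣ 3)
    (h : π ∣ cyclotomicTwelve p q) : π ∣ lehmerSeq p q 4 := by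
  refine hπ.dvd_of_dvd_pow (n := 2) ?_
  have hsq : lehmerSeq p q 4 ^ 2 = cyclotomicTwelve p q + 3 * q ^ 2 := by
    rw [lehmerSeq_four, cyclotomicTwelve]; ring
  exact hsq ▸ dvd_add h (h3.mul_right _)

lemma exists_dvd_lehmerSeq_of_dvd_twelve {p q π : R} (hπ : Prime π)
    (hdvd : cyclotomicTwelve p q ∣ 6) (h12 : π ∣ lehmerSeq p q 12) :
    ∃ j ∈ Finset.Ico 1 12, π ∣ lehmerSeq p q j := by
  rw [lehmerSeq_twelve] at h12
  rcases hπ.dvd_or_dvd h12 with h | h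
  · rcases hπ.dvd_or_dvd h with h4 | h6
    · exact ⟨4, by simp, h4⟩
    · exact ⟨6, by simp, h6⟩
  · have hπ6 : π ∣ 2 * 3 := (h.trans hdvd).trans (by norm_num)
    rcases hπ.dvd_or_dvd hπ6 with h2 | h3
    · exact ⟨3, by simp, dvd_lehmerSeq_three_of_dvd_two hπ h2 h⟩
    · exact ⟨4, by simp, dvd_lehmerSeq_four_of_dvd_three hπ h3 h⟩

lemma cyclotomicTwelve_four_mul_sub (p q : R) :
    cyclotomicTwelve (4 * q - p) q = cyclotomicTwelve p q := by
  unfold cyclotomicTwelve; ring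

lemma cyclotomicTwelve_comm (p q : R) : cyclotomicTwelve p q = cyclotomicTwelve q p := by
  unfold cyclotomicTwelve; ring

end LehmerSeq

lemma exists_int_eq_add_inv_of_pow_eq_one {x : ℂ} {n : ℕ} (hn : 0 < n) (hx : x ^ n = 1)
    {r : ℚ} (hr : x + x⁻¹ = r) : ∃ m : ℤ, x + x⁻¹ = m ∧ |m| ≤ 2 := by
  have hint : IsIntegral ℤ (x + x⁻¹) :=
    .add (.of_pow hn (hx ▸ isIntegral_one))
      (.of_pow hn (by rw [inv_pow, hx, inv_one]; exact isIntegral_one))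
  obtain ⟨m, hm⟩ := hint.exists_int_iff_exists_rat.1 ⟨r, hr⟩
  have hnorm : ‖x‖ = 1 := Complex.norm_eq_one_of_pow_eq_one hx hn.ne'
  have hle : ‖(m : ℂ)‖ ≤ 2 := by
    calc ‖(m : ℂ)‖ ≤ ‖x‖ + ‖x⁻¹‖ := hm ▸ norm_add_le x x⁻¹
      _ = 2 := by rw [norm_inv, hnorm]; norm_num
  rw [Complex.norm_intCast] at hle
  exact ⟨m, hm, by exact_mod_cast hle⟩

lemma isIntegral_of_add_sq_eq_of_mul_eq {R A : Type*} [CommRing R] [CommRing A] [Algebra R A]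
    {x y : A} {p q : R} (hp : (x + y) ^ 2 = algebraMap R A p) (hq : x * y = algebraMap R A q) :
    IsIntegral R x := by
  open Polynomial in
  refine .of_pow two_pos ⟨X ^ 2 - C (p - 2 * q) * X + C (q ^ 2), by monicity!, ?_⟩
  rw [Polynomial.eval₂_add, Polynomial.eval₂_sub, Polynomial.eval₂_mul, Polynomial.eval₂_X_pow,
    Polynomial.eval₂_X, Polynomial.eval₂_C, Polynomial.eval₂_C, map_sub, map_mul, map_pow,
    map_ofNat, ← hp, ← hq]
  ring

section LehmerPair

variable {α β : ℂ} {p q : ℤ}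

lemma exists_eq_mul_of_div_pow_eq_one (hp : (α + β) ^ 2 = p) (hq : α * β = q) (hq0 : q ≠ 0)
    {n : ℕ} (hn : 0 < n) (hroot : (α / β) ^ n = 1) : ∃ m ∈ Set.Icc (0 : ℤ) 4, p = m * q := by
  have hqC : (q : ℂ) ≠ 0 := by exact_mod_cast hq0
  obtain ⟨hα, hβ⟩ : α ≠ 0 ∧ β ≠ 0 := mul_ne_zero_iff.1 (hq ▸ hqC)
  have htrace : (α / β + (α / β)⁻¹) * q = p - 2 * q := by
    rw [← hp, ← hq]; field_simp; ring
  have hrat : α / β + (α / β)⁻¹ = ((p - 2 * q) / q : ℚ) := by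
    push_cast; rw [eq_div_iff hqC, htrace]
  obtain ⟨m, hm, hm2⟩ := exists_int_eq_add_inv_of_pow_eq_one hn hroot hrat
  rw [hm] at htrace
  have hmq : m * q = p - 2 * q := by exact_mod_cast htrace
  rw [abs_le] at hm2
  exact ⟨m + 2, ⟨by linarith, by linarith⟩, by linear_combination -hmq⟩

lemma isLehmerPair_of_forall_ne_mul (hp : (α + β) ^ 2 = p) (hq : α * β = q) (hq0 : q ≠ 0)
    (hcop : IsCoprime p q) (hne : ∀ m ∈ Set.Icc (0 : ℤ) 4, p ≠ m * q) : IsLehmerPair α β := by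
  have hp0 : p ≠ 0 := by simpa using hne 0 (by simp)
  refine ⟨isIntegral_of_add_sq_eq_of_mul_eq hp hq,
    isIntegral_of_add_sq_eq_of_mul_eq (add_comm α β ▸ hp) (mul_comm α β ▸ hq),
    ⟨p, q, hp, hq, hp0, hq0, hcop⟩, ?_⟩
  rintro ⟨n, hn, hroot⟩
  obtain ⟨m, hm, hpm⟩ := exists_eq_mul_of_div_pow_eq_one hp hq hq0 hn hroot
  exact hne m hm hpm

lemma IsLehmerPair.sq_ne_sq (h : IsLehmerPair α β) : α ^ 2 ≠ β ^ 2 := by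
  obtain ⟨-, -, ⟨p, q, -, hq, -, hq0, -⟩, hroot⟩ := h
  have hβ : β ≠ 0 := right_ne_zero_of_mul (hq ▸ Int.cast_ne_zero.2 hq0)
  exact fun hsq ↦ hroot ⟨2, two_pos, by rw [div_pow, hsq, div_self (pow_ne_zero 2 hβ)]⟩

lemma lehmerU_eq_lehmerSeq (h : α ^ 2 ≠ β ^ 2) (n : ℕ) :
    lehmerU α β n = lehmerSeq ((α + β) ^ 2) (α * β) n := by
  have hsq : α ^ 2 - β ^ 2 ≠ 0 := sub_ne_zero.2 h
  have hsub : α - β ≠ 0 := sub_ne_zero.2 fun hαβ ↦ h (by rw [hαβ])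
  have hmul := lehmerSeq_mul_eq_pow_sub_pow α β n
  unfold lehmerU
  split_ifs with hn
  · rwa [if_pos hn, ← eq_div_iff hsub, eq_comm] at hmul
  · rwa [if_neg hn, ← eq_div_iff hsq, eq_comm] at hmul

lemma lehmerU_eq_intCast (hp : (α + β) ^ 2 = p) (hq : α * β = q) (h : α ^ 2 ≠ β ^ 2) (n : ℕ) :
    lehmerU α β n = (lehmerSeq p q n : ℤ) := by
  rw [lehmerU_eq_lehmerSeq h, hp, hq]
  exact (map_lehmerSeq (Int.castRingHom ℂ) p q n).symm

lemma intDvd_intCast {ℓ : ℕ} {m : ℤ} : IntDvd ℓ (m : ℂ) ↔ (ℓ : ℤ) ∣ m := by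
  simp [IntDvd]

lemma isPrimitiveDivisor_iff (hp : (α + β) ^ 2 = p) (hq : α * β = q) (h : α ^ 2 ≠ β ^ 2)
    {ℓ n : ℕ} :
    IsPrimitiveDivisor ℓ n α β ↔ ℓ.Prime ∧ (ℓ : ℤ) ∣ lehmerSeq p q n ∧
      ¬ (ℓ : ℤ) ∣ p * (p - 4 * q) * ∏ i ∈ Finset.Ico 1 n, lehmerSeq p q i := by
  have hdisc : (α ^ 2 - β ^ 2) ^ 2 = (p * (p - 4 * q) : ℤ) := by
    push_cast; rw [← hp, ← hq]; ring
  simp only [IsPrimitiveDivisor, hdisc, lehmerU_eq_intCast hp hq h, ← Int.cast_prod,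
    ← Int.cast_mul, intDvd_intCast]

theorem IsLehmerPair.isDefective_twelve (h : IsLehmerPair α β) (hp : (α + β) ^ 2 = p)
    (hq : α * β = q) (hdvd : cyclotomicTwelve p q ∣ 6) : IsDefective 12 α β := by
  refine ⟨h, fun ℓ hprim ↦ ?_⟩
  obtain ⟨hℓ, h12, hnot⟩ := (isPrimitiveDivisor_iff hp hq h.sq_ne_sq).1 hprim
  obtain ⟨j, hj, hdj⟩ :=
    exists_dvd_lehmerSeq_of_dvd_twelve (Nat.prime_iff_prime_int.1 hℓ) hdvd h12
  exact hnot ((hdj.trans (Finset.dvd_prod_of_mem _ hj)).mul_left _)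

end LehmerPair

lemma csqrt_sq (a : ℤ) : csqrt a ^ 2 = a := by
  simpa only [csqrt, one_div] using Complex.cpow_ofNat_inv_pow (a : ℂ) 2

lemma assocFst_add_assocSnd_sq (a b : ℤ) : (assocFst a b + assocSnd a b) ^ 2 = a := by
  rw [← csqrt_sq a, assocFst, assocSnd]; ring

lemma assocFst_mul_assocSnd (a b : ℤ) : assocFst a b * assocSnd a b = (a - b) / 4 := by
  rw [← csqrt_sq a, ← csqrt_sq b, assocFst, assocSnd]; ring

theorem isDefective_twelve_assoc {p q : ℤ} (hq0 : q ≠ 0) (hcop : IsCoprime p q)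
    (hne : ∀ m ∈ Set.Icc (0 : ℤ) 4, p ≠ m * q) (hdvd : cyclotomicTwelve p q ∣ 6) :
    IsDefective 12 (assocFst p (p - 4 * q)) (assocSnd p (p - 4 * q)) := by
  have hp := assocFst_add_assocSnd_sq p (p - 4 * q)
  have hq : assocFst p (p - 4 * q) * assocSnd p (p - 4 * q) = q := by
    rw [assocFst_mul_assocSnd]; push_cast; ring
  exact (isLehmerPair_of_forall_ne_mul hp hq hq0 hcop hne).isDefective_twelve hp hq hdvd

section Zeta

variable {i : ℕ} {k ε : ℤ}

lemma zeta_neg_one (i : ℕ) :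
    zeta i (-1) = if i = 0 then -1 else if i = 1 then 2 else if i = 2 then 1 else -1 := rfl

lemma zeta_zero (i : ℕ) : zeta i 0 = if i = 0 then 0 else 1 := rfl

lemma zeta_add_one (hk : 0 ≤ k) : zeta i (k + 1) = 4 * zeta i k - zeta i (k - 1) := by
  lift k to ℕ using hk
  have hsub : ((k : ℤ) - 1 + 1).toNat = k := by omega
  rw [zeta, zeta, zeta, hsub]
  rfl

lemma zeta_add (hk : 0 ≤ k) (hε : ε = 1 ∨ ε = -1) :
    zeta i (k + ε) = 4 * zeta i k - zeta i (k - ε) := by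
  have hrec := zeta_add_one (i := i) hk
  rcases hε with rfl | rfl
  · exact hrec
  · rw [sub_neg_eq_add, hrec, ← sub_eq_add_neg]; ring

lemma isCoprime_zeta_sub_one (hk : 0 ≤ k) : IsCoprime (zeta i (k - 1)) (zeta i k) := by
  induction k, hk using Int.leInduction with
  | base =>
    rw [zero_sub, zeta_neg_one, zeta_zero]
    by_cases hi : i = 0
    · simpa only [if_pos hi] using isCoprime_zero_right.2 isUnit_one.neg
    · simpa only [if_neg hi] using isCoprime_one_right
  | succ k hk ih =>
    rw [add_sub_cancel_right, zeta_add_one hk, sub_eq_neg_add]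
    exact (ih.neg_left.add_mul_right_left 4).symm

lemma isCoprime_zeta_sub (hk : 0 ≤ k) (hε : ε = 1 ∨ ε = -1) :
    IsCoprime (zeta i (k - ε)) (zeta i k) := by
  rcases hε with rfl | rfl
  · exact isCoprime_zeta_sub_one hk
  · simpa using (isCoprime_zeta_sub_one (i := i) (add_nonneg hk zero_le_one)).symm

lemma cyclotomicTwelve_zeta_sub_one_dvd_six (hk : 0 ≤ k) :
    cyclotomicTwelve (zeta i (k - 1)) (zeta i k) ∣ 6 := by
  induction k, hk using Int.leInduction with
  | base =>
    rw [cyclotomicTwelve, zero_sub, zeta_neg_one, zeta_zero]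
    split_ifs <;> norm_num
  | succ k hk ih =>
    rwa [add_sub_cancel_right, zeta_add_one hk, cyclotomicTwelve_comm,
      cyclotomicTwelve_four_mul_sub]

lemma cyclotomicTwelve_zeta_sub_dvd_six (hk : 0 ≤ k) (hε : ε = 1 ∨ ε = -1) :
    cyclotomicTwelve (zeta i (k - ε)) (zeta i k) ∣ 6 := by
  rcases hε with rfl | rfl
  · exact cyclotomicTwelve_zeta_sub_one_dvd_six hk
  · rw [sub_neg_eq_add, cyclotomicTwelve_comm]
    simpa using cyclotomicTwelve_zeta_sub_one_dvd_six (i := i) (add_nonneg hk zero_le_one)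

lemma zeta_nonneg_and_lt_zeta_add_one (hk : 0 ≤ k) :
    0 ≤ zeta i k ∧ zeta i k < zeta i (k + 1) := by
  induction k, hk using Int.leInduction with
  | base =>
    rw [zeta_add_one le_rfl, zero_sub, zeta_neg_one, zeta_zero]
    split_ifs <;> norm_num
  | succ k hk ih =>
    have hrec := zeta_add_one (i := i) (add_nonneg hk zero_le_one)
    rw [add_sub_cancel_right] at hrec
    constructor <;> linarith

lemma zeta_zero_add_le (hk : 0 ≤ k) : zeta i 0 + k ≤ zeta i k := by
  induction k, hk using Int.leInduction with
  | base => simp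
  | succ k hk ih =>
    have hlt := (zeta_nonneg_and_lt_zeta_add_one (i := i) hk).2
    linarith

lemma two_le_zeta_or (hi : i ≤ 3) (hk : 0 ≤ k)
    (hexc : ¬ ((i = 0 ∧ k = 0) ∨ (i = 0 ∧ k = 1) ∨ (i = 1 ∧ k = 0) ∨ (i = 2 ∧ k = 0))) :
    2 ≤ zeta i k ∨ (zeta i k = 1 ∧ zeta i (k - 1) = -1) := by
  have hgrowth := zeta_zero_add_le (i := i) hk
  by_cases hi0 : i = 0
  · have hzero : zeta i 0 = 0 := (zeta_zero i).trans (if_pos hi0)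
    left; omega
  · have hzero : zeta i 0 = 1 := (zeta_zero i).trans (if_neg hi0)
    by_cases hk0 : k = 0
    · obtain rfl : i = 3 := by omega
      right; simp [hk0, zeta_zero, zeta_neg_one]
    · left; omega

lemma zeta_sub_one_ne_mul (hk : 0 ≤ k)
    (h : 2 ≤ zeta i k ∨ (zeta i k = 1 ∧ zeta i (k - 1) = -1)) :
    ∀ m ∈ Set.Icc (0 : ℤ) 4, zeta i (k - 1) ≠ m * zeta i k := by
  rintro m ⟨hm0, -⟩ heq
  rcases h with h2 | ⟨h1, hneg⟩
  · have hunit : IsUnit (zeta i k) :=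
      (isCoprime_zeta_sub_one hk).symm.isUnit_of_dvd (heq ▸ dvd_mul_left _ _)
    rcases Int.isUnit_iff.1 hunit with h | h <;> omega
  · rw [h1, hneg] at heq
    omega

lemma zeta_sub_ne_mul (hk : 0 ≤ k) (hε : ε = 1 ∨ ε = -1)
    (h : 2 ≤ zeta i k ∨ (zeta i k = 1 ∧ zeta i (k - 1) = -1)) :
    ∀ m ∈ Set.Icc (0 : ℤ) 4, zeta i (k - ε) ≠ m * zeta i k := by
  have hne := zeta_sub_one_ne_mul hk h
  rcases hε with rfl | rfl
  · exact hne
  · rintro m ⟨hm0, hm4⟩ heq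
    rw [sub_neg_eq_add, zeta_add_one hk] at heq
    exact hne (4 - m) ⟨by linarith, by linarith⟩ (by linear_combination -heq)

end Zeta

theorem twelve_defective_families_are_defective (i : ℕ) (hi : i ≤ 3) (k ε : ℤ)
    (hk : 0 ≤ k) (hε : ε = 1 ∨ ε = -1)
    (hexc : ¬ ((i = 0 ∧ k = 0) ∨ (i = 0 ∧ k = 1) ∨ (i = 1 ∧ k = 0) ∨ (i = 2 ∧ k = 0))) :
    IsDefective 12 (assocFst (zeta i (k - ε)) (-zeta i (k + ε)))
      (assocSnd (zeta i (k - ε)) (-zeta i (k + ε))) := by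
  have hcase := two_le_zeta_or hi hk hexc
  have hpos : zeta i k ≠ 0 := by omega
  have hsnd : -zeta i (k + ε) = zeta i (k - ε) - 4 * zeta i k := by
    rw [zeta_add hk hε]; ring
  rw [hsnd]
  exact isDefective_twelve_assoc hpos (isCoprime_zeta_sub hk hε) (zeta_sub_ne_mul hk hε hcase)
    (cyclotomicTwelve_zeta_sub_dvd_six hk hε)
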